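/- arXiv:2210.10939 — 2 statements merged into one kernel-verified Lean document; each statement's English description precedes it below -/
import Mathlib

section
/- Suppose the family F(x,t), with F_0 = ∏_ν f_ν^{n_ν} (f_ν pairwise coprime monic), satisfies (α,δ_n)-Zd for f_ν = x. Then Δ(F,x)(0,t)_0 = (−1)^{n_ν(n_ν−1)/2} · n_ν^{n_ν} · δ_n(0)^{n_ν−1} · (∏_{ν'≠ν} f_{ν'}(0)^{n_{ν'}})^{n_ν−1} / α(0)^{n_ν−1}. -/
open Finset Polynomial

noncomputable section

/-- The limit of a Hahn (Puiseux) series as `t → 0`: the coefficient of the lowest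
power of `t` occurring in it (its leading coefficient). -/
def lim0 {L : Type*} [Field L] (f : HahnSeries ℚ L) : L := f.coeff f.order

/-- `s` is a Puiseux series with nonnegative support and constant term `a`
(i.e. `s(0) = a`). -/
def HasConst {L : Type*} [Field L] (s : HahnSeries ℚ L) (a : L) : Prop :=
  s.coeff 0 = a ∧ ∀ q < (0 : ℚ), s.coeff q = 0

/-- The natural ring map `A[[t]] → L((t^ℚ))` induced by `φ : A →+* L`. -/
def Phi {A L : Type*} [CommRing A] [Field L] (φ : A →+* L) :
    PowerSeries A →+* HahnSeries ℚ L :=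
  (HahnSeries.ofPowerSeries ℚ L).comp (PowerSeries.map φ)

/-- The polynomial with power-series coefficients determined by a family
`F(x,t) = Σ_i p_i(x) t^i` of polynomials of degree at most `n'`. -/
def fam {A : Type*} [CommRing A] (n' : ℕ) (p : ℕ → Polynomial A) :
    Polynomial (PowerSeries A) :=
  ∑ j ∈ Finset.range (n' + 1), Polynomial.C (PowerSeries.mk fun i => (p i).coeff j) * X ^ j

/-- `∏_{q ≠ q'} (S q − S q')`, the product of the differences of all (ordered) pairs of
distinct `t`-roots.  For a monic family it equals `(-1)^(N(N-1)/2)` times the discriminant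
`Δ_{A[[t]]}(F) = ∏_{q<q'} (S q − S q')²`; in particular it is nonzero iff
`Δ_{A[[t]]}(F) ≠ 0`. -/
def rootsSep {L : Type*} [Field L] {ι : Type*} [Fintype ι] [DecidableEq ι]
    (S : ι → HahnSeries ℚ L) : HahnSeries ℚ L :=
  ∏ q ∈ Finset.univ.offDiag, (S q.1 - S q.2)

/-- `Δ(F, f_ν)(a ν ℓ, t)_0`: the limit of the generalized formal discriminant of the family
with respect to `f_ν = ∏_ℓ (x − a ν ℓ)`, evaluated at `x = a ν ℓ`.  Here the `t`-roots
approaching the roots of `f_ν` are grouped as `s ν · i` for `i` in `Fin (n ν)`; following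
Definition 2.3, `s'_i(x) = f_ν(x) − ∏_ℓ (x − s ν ℓ i)`, so that
`s'_i(x) − s'_j(x) = ∏_ℓ (x − s ν ℓ j) − ∏_ℓ (x − s ν ℓ i)`, and
`Δ(F,f_ν)(x,t) = [∏_{others} (x − s_ℓ)]^(2 n ν − 2) ∏_{i<j} (s'_i − s'_j)²`. -/
def gdlim {L : Type*} [Field L] {m : ℕ} (d n : Fin m → ℕ)
    (a : (ν : Fin m) → Fin (d ν) → L)
    (s : (ν : Fin m) → (ℓ : Fin (d ν)) → Fin (n ν) → HahnSeries ℚ L)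
    (ν : Fin m) (ℓ : Fin (d ν)) : L :=
  lim0 ((∏ ν' ∈ Finset.univ.erase ν, ∏ ℓ', ∏ i', (HahnSeries.C (a ν ℓ) - s ν' ℓ' i')) ^
      (2 * n ν - 2) *
    ∏ q ∈ Finset.univ.filter (fun q : Fin (n ν) × Fin (n ν) => q.1 < q.2),
      ((∏ ℓ', (HahnSeries.C (a ν ℓ) - s ν ℓ' q.2)) -
        ∏ ℓ', (HahnSeries.C (a ν ℓ) - s ν ℓ' q.1)) ^ 2)

/-- The discriminant `Δ(f) = ∏_{ℓ<ℓ'} (a ℓ − a ℓ')²` of a monic split polynomial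
`f = ∏_ℓ (x − a ℓ)`. -/
def discOf {L : Type*} [Field L] {d : ℕ} (a : Fin d → L) : L :=
  ∏ q ∈ Finset.univ.filter (fun q : Fin d × Fin d => q.1 < q.2), (a q.1 - a q.2) ^ 2

/-- The vertex `ver(F)` of the family (Definition 3.1), computed from the root data:
`ver(F) = ∏_{ν,ℓ} Δ(F,f_ν)(a_{νℓ},t)_0 · ∏_{ν<ν'} res(f_ν,f_{ν'})^(2(n_ν+n_{ν'}−n_ν n_{ν'}))`,
where `res(f_ν, f_{ν'}) = ∏_{ℓ,ℓ'} (a ν ℓ − a ν' ℓ')`. -/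
def ver {L : Type*} [Field L] {m : ℕ} (d n : Fin m → ℕ)
    (a : (ν : Fin m) → Fin (d ν) → L)
    (s : (ν : Fin m) → (ℓ : Fin (d ν)) → Fin (n ν) → HahnSeries ℚ L) : L :=
  (∏ ν, ∏ ℓ, gdlim d n a s ν ℓ) *
    ∏ ν, ∏ ν' ∈ Finset.Ioi ν,
      (∏ ℓ, ∏ ℓ', (a ν ℓ - a ν' ℓ')) ^
        (2 * ((n ν : ℤ) + (n ν' : ℤ) - (n ν : ℤ) * (n ν' : ℤ)))

/-!
Near the roots `sᵢ` of `F` that tend to `0`, the Zeuthen decomposition `α F = B ^ N + t ^ n D` makes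
`B / τ`, with `τ = t ^ (n / N)`, a coordinate adapted to `F`. The values `cᵢ = (B (sᵢ) / τ)(0)` all
satisfy `c ^ N = -δ(0)`, and Taylor expansion gives `B'(0) (sᵢ - sⱼ) = τ (cᵢ - cⱼ) + ⋯`.
Differentiating the decomposition at `sᵢ` yields `∏_{j ≠ i} (cᵢ - cⱼ) = N cᵢ ^ (N - 1) ≠ 0`, so the
`cᵢ` are distinct and hence are all the roots of `x ^ N + δ(0)`. The product of the
`(sᵢ - sⱼ) ^ 2` is therefore `τ ^ (N (N - 1))` times the discriminant of `x ^ N + δ(0)`, up to the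
scale `B'(0) ^ (N (N - 1))`, and `B'(0) ^ N = α(0) ∏ g_j(0) ^ M_j` is read off at `t = 0`.
All of this takes place in the valuation ring of the Hahn series, reduced modulo its maximal ideal.
-/

section Discriminant

variable {N : ℕ}

lemma prod_lt_sub_sq {R : Type*} [CommRing R] (c : Fin N → R) :
    ∏ q : Fin N × Fin N with q.1 < q.2, (c q.1 - c q.2) ^ 2 =
      (-1) ^ (N * (N - 1) / 2) * ∏ i, ∏ j ∈ univ.erase i, (c i - c j) := by
  have card_pairs : #{q : Fin N × Fin N | q.1 < q.2} = N * (N - 1) / 2 := by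
    rw [Fintype.card_product_filter_lt, Fintype.card_fin, Nat.choose_two_right]
  have off_diag : ∏ i, ∏ j ∈ univ.erase i, (c i - c j) =
      ∏ q : Fin N × Fin N with q.1 < q.2, (c q.2 - c q.1) * (c q.1 - c q.2) := by
    rw [prod_filter, Fintype.prod_prod_type]
    simp only [← prod_filter, filter_lt_eq_Ioi, ← compl_singleton]
    exact (prod_prod_Ioi_mul_eq_prod_prod_off_diag fun j i => c i - c j).symm.trans
      (by simp only [mul_comm])
  rw [off_diag, ← card_pairs, ← prod_const, ← prod_mul_distrib]
  exact prod_congr rfl fun q _ => by ring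

lemma prod_lt_const_sq {M : Type*} [CommMonoid M] (x : M) :
    ∏ q : Fin N × Fin N with q.1 < q.2, x ^ 2 = x ^ (N * (N - 1)) := by
  rw [prod_const, ← pow_mul, Fintype.card_product_filter_lt, Fintype.card_fin,
    Nat.choose_two_right, Nat.mul_div_cancel' (Nat.even_mul_pred_self N).two_dvd]

variable {L : Type*} [Field L] {c : Fin N → L} {d : L}

lemma prod_X_sub_C_eq_X_pow_add_C (hN : N ≠ 0) (hc : Function.Injective c)
    (hd : ∀ i, c i ^ N = -d) : ∏ i, (X - C (c i)) = X ^ N + C d := by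
  refine (eq_of_monic_of_dvd_of_natDegree_le (monic_prod_X_sub_C c univ)
    (monic_X_pow_add_C d hN) ?_ ?_).symm
  · refine prod_dvd_of_coprime (fun i _ j _ hij => pairwise_coprime_X_sub_C hc hij) fun i _ => ?_
    simp [dvd_iff_isRoot, hd i]
  · simp

lemma discOf_eq_of_prod_X_sub_C (h : ∏ i, (X - C (c i)) = X ^ N + C d) :
    discOf c = (-1) ^ (N * (N - 1) / 2) * N ^ N * d ^ (N - 1) := by
  have prod_sub (i : Fin N) : ∏ j ∈ univ.erase i, (c i - c j) = N * c i ^ (N - 1) := by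
    rw [← Lagrange.eval_nodal, ← Lagrange.eval_nodal_derivative_eval_node_eq (mem_univ i),
      Lagrange.nodal, h]
    simp [derivative_X_pow]
  have prod_roots_pow : (∏ i, c i) ^ (N - 1) = d ^ (N - 1) := by
    rcases eq_or_ne N 0 with rfl | hN
    · simp
    have h0 := congrArg (eval 0) h
    simp only [eval_prod, eval_sub, eval_X, eval_C, zero_sub, prod_neg, card_univ,
      Fintype.card_fin, eval_add, eval_pow, zero_pow hN, zero_add] at h0
    rw [← h0, mul_pow, ← pow_mul, (Nat.even_mul_pred_self N).neg_one_pow, one_mul]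
  rw [discOf, prod_lt_sub_sq, prod_congr rfl fun i _ => prod_sub i, prod_mul_distrib, prod_const,
    prod_pow, prod_roots_pow, card_univ, Fintype.card_fin, mul_assoc]

end Discriminant

section LocalRing

variable {O L : Type*} [CommRing O] [Field L] {ρ : O →+* L}

lemma map_eval_of_map_eq_zero {x : O} (hx : ρ x = 0) (Q : O[X]) : ρ (Q.eval x) = ρ (Q.eval 0) := by
  rw [← eval_map_apply, ← eval_map_apply, hx, map_zero]

lemma exists_eval_sub_eq_sub_mul {x y : O} (hx : ρ x = 0) (hy : ρ y = 0) (Q : O[X]) :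
    ∃ u, Q.eval x - Q.eval y = (x - y) * u ∧ ρ u = ρ (Q.derivative.eval 0) := by
  obtain ⟨k, hk⟩ := Q.binomExpansion y (x - y)
  refine ⟨Q.derivative.eval y + k * (x - y), ?_, ?_⟩
  · rw [add_sub_cancel] at hk
    linear_combination hk
  · simp [hx, hy, map_eval_of_map_eq_zero hy]

/-- A Zeuthen decomposition over a ring `O` with a residue map `ρ`: the polynomial
`F = ∏ᵢ (x - sᵢ) · W`, whose roots `sᵢ` reduce to `0`, satisfies `a F = B ^ N + τ ^ N D`, and
`a`, `W`, `D` do not reduce to polynomials vanishing at `0`. Here `τ` plays the role of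
`t ^ (n / N)`, and `D` gathers `δ_n` together with all terms of higher order. -/
structure IsZeuthenDecomposition (ρ : O →+* L) {N : ℕ} (s : Fin N → O) (W a B D : O[X])
    (τ : O) : Prop where
  map_root : ∀ i, ρ (s i) = 0
  scale_ne_zero : τ ≠ 0
  map_scale : ρ τ = 0
  mul_eq : a * ((∏ i, (X - C (s i))) * W) = B ^ N + C (τ ^ N) * D
  map_eval_cofactor : ρ (W.eval 0) ≠ 0
  map_eval_multiplier : ρ (a.eval 0) ≠ 0
  map_eval_remainder : ρ (D.eval 0) ≠ 0

namespace IsZeuthenDecomposition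

variable {N : ℕ} {s : Fin N → O} {W a B D : O[X]} {τ : O}

lemma eval_pow_eq (h : IsZeuthenDecomposition ρ s W a B D τ) (i : Fin N) :
    B.eval (s i) ^ N = τ ^ N * -D.eval (s i) := by
  have root : (∏ i, (X - C (s i))).eval (s i) = 0 := by
    rw [eval_prod, prod_eq_zero (mem_univ i) (by simp)]
  have key := congrArg (eval (s i)) h.mul_eq
  simp only [eval_mul, eval_add, eval_pow, eval_C, root] at key
  linear_combination -key

lemma map_derivative_eval_pow (h : IsZeuthenDecomposition ρ s W a B D τ) (hN : N ≠ 0) :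
    ρ (B.derivative.eval 0) ^ N = ρ (a.eval 0) * ρ (W.eval 0) := by
  have reduced : (X : L[X]) ^ N * (a.map ρ * W.map ρ) = B.map ρ ^ N := by
    have key := congrArg (Polynomial.map ρ) h.mul_eq
    simp only [Polynomial.map_mul, Polynomial.map_add, Polynomial.map_pow, Polynomial.map_prod,
      Polynomial.map_sub, map_X, map_C, h.map_root, map_pow, h.map_scale, zero_pow hN, map_zero,
      zero_mul, add_zero, sub_zero, prod_const, card_univ, Fintype.card_fin] at key
    rw [← key, mul_left_comm]
  obtain ⟨b, hb⟩ : X ∣ B.map ρ := 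
    prime_X.dvd_of_dvd_pow (reduced ▸ (dvd_pow_self X hN).mul_right _)
  have cofactor : a.map ρ * W.map ρ = b ^ N :=
    mul_left_cancel₀ (pow_ne_zero N X_ne_zero) (by rw [reduced, hb, mul_pow])
  rw [← eval_map_apply, ← derivative_map, hb, ← eval_map_apply, ← eval_map_apply, map_zero,
    ← eval_mul, cofactor]
  simp

lemma map_derivative_eval_ne_zero (h : IsZeuthenDecomposition ρ s W a B D τ) (hN : N ≠ 0) :
    ρ (B.derivative.eval 0) ≠ 0 :=
  ne_zero_pow hN <| by
    rw [h.map_derivative_eval_pow hN]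
    exact mul_ne_zero h.map_eval_multiplier h.map_eval_cofactor

lemma mul_prod_sub_eq (h : IsZeuthenDecomposition ρ s W a B D τ) (i : Fin N) :
    a.eval (s i) * ((∏ j ∈ univ.erase i, (s i - s j)) * W.eval (s i)) =
      N * B.eval (s i) ^ (N - 1) * B.derivative.eval (s i) + τ ^ N * D.derivative.eval (s i) := by
  have key := congrArg (fun Q => Q.derivative.eval (s i)) h.mul_eq
  simp only [← Lagrange.nodal.eq_def, derivative_mul, derivative_add, derivative_pow,
    derivative_C, eval_mul, eval_add, eval_pow, eval_C, eval_zero,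
    Lagrange.eval_nodal_at_node (mem_univ i),
    Lagrange.eval_nodal_derivative_eval_node_eq (mem_univ i), Lagrange.eval_nodal] at key
  linear_combination key

variable [IsDomain O]

lemma exists_scaled_eval [IsIntegrallyClosed O] (h : IsZeuthenDecomposition ρ s W a B D τ)
    (hN : N ≠ 0) : ∃ γ : Fin N → O, ∀ i, B.eval (s i) = τ * γ i := by
  have scale_dvd (i : Fin N) : τ ∣ B.eval (s i) :=
    (IsIntegrallyClosed.pow_dvd_pow_iff hN).1 ⟨_, h.eval_pow_eq i⟩
  choose γ hγ using scale_dvd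
  exact ⟨γ, hγ⟩

variable {γ : Fin N → O}

lemma map_scaled_eval_pow (h : IsZeuthenDecomposition ρ s W a B D τ)
    (hγ : ∀ i, B.eval (s i) = τ * γ i) (i : Fin N) : ρ (γ i) ^ N = -ρ (D.eval 0) := by
  have key : γ i ^ N = -D.eval (s i) :=
    mul_left_cancel₀ (pow_ne_zero N h.scale_ne_zero) (by rw [← mul_pow, ← hγ, h.eval_pow_eq])
  rw [← map_pow, key, map_neg, map_eval_of_map_eq_zero (h.map_root i)]

lemma exists_scaled_sub [IsLocalHom ρ] (h : IsZeuthenDecomposition ρ s W a B D τ) (hN : N ≠ 0)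
    (hγ : ∀ i, B.eval (s i) = τ * γ i) (i j : Fin N) :
    ∃ σ, s i - s j = τ * σ ∧ ρ σ * ρ (B.derivative.eval 0) = ρ (γ i) - ρ (γ j) := by
  obtain ⟨u, hu, hρu⟩ := exists_eval_sub_eq_sub_mul (h.map_root i) (h.map_root j) B
  rw [hγ, hγ, ← mul_sub] at hu
  have unit_u : IsUnit u :=
    isUnit_of_map_unit ρ u (hρu ▸ (h.map_derivative_eval_ne_zero hN).isUnit)
  obtain ⟨σ, hσ⟩ : τ ∣ s i - s j := unit_u.dvd_mul_right.1 ⟨_, hu.symm⟩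
  refine ⟨σ, hσ, ?_⟩
  have scaled_sub : γ i - γ j = σ * u :=
    mul_left_cancel₀ h.scale_ne_zero (by rw [hu, hσ, mul_assoc])
  rw [← hρu, ← map_mul, ← map_sub, scaled_sub]

lemma prod_sub_map_scaled_eval [IsLocalHom ρ] (h : IsZeuthenDecomposition ρ s W a B D τ)
    (hN : N ≠ 0) (hγ : ∀ i, B.eval (s i) = τ * γ i) (i : Fin N) :
    ∏ j ∈ univ.erase i, (ρ (γ i) - ρ (γ j)) = N * ρ (γ i) ^ (N - 1) := by
  choose σ hσ hσγ using fun j => h.exists_scaled_sub hN hγ i j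
  have card_erase : #(univ.erase i) = N - 1 := by simp
  have key : a.eval (s i) * ((∏ j ∈ univ.erase i, σ j) * W.eval (s i)) =
      N * γ i ^ (N - 1) * B.derivative.eval (s i) + τ * D.derivative.eval (s i) := by
    refine mul_left_cancel₀ (pow_ne_zero (N - 1) h.scale_ne_zero) ?_
    have unscaled := h.mul_prod_sub_eq i
    rw [prod_congr rfl fun j _ => hσ j, prod_mul_distrib, prod_const, card_erase, hγ, mul_pow,
      ← pow_sub_one_mul hN τ] at unscaled
    linear_combination unscaled
  have reduced := congrArg ρ key
  simp only [map_mul, map_add, map_pow, map_prod, map_natCast, h.map_scale, zero_mul, add_zero,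
    map_eval_of_map_eq_zero (h.map_root i)] at reduced
  refine mul_right_cancel₀ (h.map_derivative_eval_ne_zero hN) ?_
  rw [← reduced, ← prod_congr rfl fun j _ => hσγ j, prod_mul_distrib, prod_const, card_erase,
    mul_assoc, pow_sub_one_mul hN, h.map_derivative_eval_pow hN]
  ring

lemma injective_map_scaled_eval [IsLocalHom ρ] (h : IsZeuthenDecomposition ρ s W a B D τ)
    (hN : (N : L) ≠ 0) (hγ : ∀ i, B.eval (s i) = τ * γ i) :
    Function.Injective fun i => ρ (γ i) := by
  intro i j hij
  by_contra hne
  have hN' : N ≠ 0 := by rintro rfl; simp at hN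
  have ne_zero : ρ (γ i) ≠ 0 := ne_zero_pow hN' <| by
    simpa [h.map_scaled_eval_pow hγ] using h.map_eval_remainder
  refine mul_ne_zero hN (pow_ne_zero (N - 1) ne_zero) ?_
  rw [← h.prod_sub_map_scaled_eval hN' hγ]
  exact prod_eq_zero (mem_erase.2 ⟨Ne.symm hne, mem_univ j⟩) (sub_eq_zero.2 hij)

theorem exists_prod_lt_sub_sq_eq [IsIntegrallyClosed O] [IsLocalHom ρ]
    (h : IsZeuthenDecomposition ρ s W a B D τ) (hN : (N : L) ≠ 0) :
    ∃ v, ∏ q : Fin N × Fin N with q.1 < q.2, (s q.1 - s q.2) ^ 2 = τ ^ (N * (N - 1)) * v ∧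
      ρ v = (-1) ^ (N * (N - 1) / 2) * N ^ N * ρ (D.eval 0) ^ (N - 1) /
        (ρ (a.eval 0) * ρ (W.eval 0)) ^ (N - 1) := by
  have hN' : N ≠ 0 := by rintro rfl; simp at hN
  obtain ⟨γ, hγ⟩ := h.exists_scaled_eval hN'
  choose σ hσ hσγ using fun i j => h.exists_scaled_sub hN' hγ i j
  refine ⟨∏ q : Fin N × Fin N with q.1 < q.2, σ q.1 q.2 ^ 2, ?_, ?_⟩
  · simp only [hσ, mul_pow, prod_mul_distrib, prod_lt_const_sq]
  have disc := discOf_eq_of_prod_X_sub_C <| prod_X_sub_C_eq_X_pow_add_C hN'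
    (h.injective_map_scaled_eval hN hγ) (h.map_scaled_eval_pow hγ)
  simp only [discOf, ← hσγ, mul_pow, prod_mul_distrib, prod_lt_const_sq] at disc
  rw [pow_mul, h.map_derivative_eval_pow hN'] at disc
  rw [eq_div_iff (pow_ne_zero _ (mul_ne_zero h.map_eval_multiplier h.map_eval_cofactor)), ← disc]
  simp only [map_prod, map_pow]

end IsZeuthenDecomposition

end LocalRing

section HahnIntegers

variable (Γ L : Type*) [AddCommGroup Γ] [LinearOrder Γ] [IsOrderedAddMonoid Γ] [Field L]

/-- The valuation ring of the Hahn series `L((t^Γ))`, i.e. the series in which only nonnegative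
powers of `t` occur. -/
def hahnIntegers : ValuationSubring (HahnSeries Γ L) :=
  (HahnSeries.addVal Γ L).toValuation.valuationSubring

variable {Γ L}

lemma mem_hahnIntegers_iff {f : HahnSeries Γ L} :
    f ∈ hahnIntegers Γ L ↔ ∀ q < 0, f.coeff q = 0 := by
  have mem_iff : f ∈ hahnIntegers Γ L ↔ ((0 : Γ) : WithTop Γ) ≤ f.orderTop := Iff.rfl
  simp only [mem_iff, HahnSeries.le_orderTop_iff_forall, WithTop.coe_lt_coe]

lemma coeff_zero_mul_of_mem_hahnIntegers {f g : HahnSeries Γ L} (hf : f ∈ hahnIntegers Γ L)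
    (hg : g ∈ hahnIntegers Γ L) : (f * g).coeff 0 = f.coeff 0 * g.coeff 0 := by
  rw [mem_hahnIntegers_iff] at hf hg
  rw [HahnSeries.coeff_mul]
  refine sum_eq_single ((0, 0) : Γ × Γ) (fun q hq hne => absurd ?_ hne) fun h => ?_
  · rw [Finset.mem_antidiagonal] at hq
    have fst_nonneg : 0 ≤ q.1 := not_lt.1 fun h => hq.1 (hf _ h)
    have snd_nonneg : 0 ≤ q.2 := not_lt.1 fun h => hq.2.1 (hg _ h)
    exact Prod.ext_iff.2 ((add_eq_zero_iff_of_nonneg fst_nonneg snd_nonneg).1 hq.2.2)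
  · contrapose! h
    simpa [Finset.mem_antidiagonal] using mul_ne_zero_iff.1 h

variable (Γ L) in
/-- The residue map of `hahnIntegers Γ L`, sending a series to its value at `t = 0`. -/
def constCoeff : hahnIntegers Γ L →+* L where
  toFun f := (f : HahnSeries Γ L).coeff 0
  map_one' := by simp
  map_mul' f g := coeff_zero_mul_of_mem_hahnIntegers f.2 g.2
  map_zero' := rfl
  map_add' _ _ := rfl

lemma order_eq_zero_of_constCoeff_ne_zero {f : hahnIntegers Γ L} (hf : constCoeff Γ L f ≠ 0) :
    (f : HahnSeries Γ L).order = 0 := by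
  have ne_zero : (f : HahnSeries Γ L) ≠ 0 := fun h => hf (by simp [constCoeff, h])
  refine le_antisymm (HahnSeries.order_le_of_coeff_ne_zero hf) (not_lt.1 fun h => ?_)
  exact HahnSeries.leadingCoeff_ne_zero.2 ne_zero <|
    HahnSeries.leadingCoeff_eq.trans (mem_hahnIntegers_iff.1 f.2 _ h)

instance : IsLocalHom (constCoeff Γ L) where
  map_nonunit f hf := by
    have hf0 : (f : HahnSeries Γ L) ≠ 0 := fun h => hf.ne_zero (by simp [constCoeff, h])
    have order_inv : (f : HahnSeries Γ L)⁻¹.order = 0 := by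
      have order_add := HahnSeries.order_mul hf0 (inv_ne_zero hf0)
      rwa [mul_inv_cancel₀ hf0, HahnSeries.order_one,
        order_eq_zero_of_constCoeff_ne_zero hf.ne_zero, zero_add, eq_comm] at order_add
    have inv_mem : (f : HahnSeries Γ L)⁻¹ ∈ hahnIntegers Γ L :=
      mem_hahnIntegers_iff.2 fun q hq => HahnSeries.coeff_eq_zero_of_lt_order (order_inv ▸ hq)
    exact .of_mul_eq_one ⟨_, inv_mem⟩ (Subtype.ext (mul_inv_cancel₀ hf0))

lemma lim0_single_mul {q : ℚ} {f : hahnIntegers ℚ L} (hf : constCoeff ℚ L f ≠ 0) :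
    lim0 (HahnSeries.single q 1 * (f : HahnSeries ℚ L)) = constCoeff ℚ L f := by
  rw [lim0, ← HahnSeries.leadingCoeff_eq, HahnSeries.leadingCoeff_mul,
    HahnSeries.leadingCoeff_of_single, one_mul, HahnSeries.leadingCoeff_eq,
    order_eq_zero_of_constCoeff_ne_zero hf]
  rfl

namespace IsZeuthenDecomposition

variable {N : ℕ} {s : Fin N → hahnIntegers ℚ L} {W a B D : (hahnIntegers ℚ L)[X]}
  {τ : hahnIntegers ℚ L}

theorem lim0_eq (h : IsZeuthenDecomposition (constCoeff ℚ L) s W a B D τ) (hN : (N : L) ≠ 0)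
    {e : ℚ} (hτ : (τ : HahnSeries ℚ L) = HahnSeries.single e 1) :
    lim0 (((W.eval 0 : hahnIntegers ℚ L) : HahnSeries ℚ L) ^ (2 * N - 2) *
        ∏ q : Fin N × Fin N with q.1 < q.2, ((s q.1 : HahnSeries ℚ L) - s q.2) ^ 2) =
      (-1) ^ (N * (N - 1) / 2) * N ^ N * constCoeff ℚ L (D.eval 0) ^ (N - 1) *
        constCoeff ℚ L (W.eval 0) ^ (N - 1) / constCoeff ℚ L (a.eval 0) ^ (N - 1) := by
  obtain ⟨v, hv, hρv⟩ := h.exists_prod_lt_sub_sq_eq hN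
  have cofactor_ne_zero := h.map_eval_cofactor
  have value : constCoeff ℚ L (W.eval 0 ^ (2 * N - 2) * v) =
      (-1) ^ (N * (N - 1) / 2) * N ^ N * constCoeff ℚ L (D.eval 0) ^ (N - 1) *
        constCoeff ℚ L (W.eval 0) ^ (N - 1) / constCoeff ℚ L (a.eval 0) ^ (N - 1) := by
    rw [map_mul, map_pow, hρv, show 2 * N - 2 = (N - 1) + (N - 1) by omega, pow_add, mul_pow]
    field_simp
  have value_ne_zero : constCoeff ℚ L (W.eval 0 ^ (2 * N - 2) * v) ≠ 0 := by
    rw [value]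
    simp [hN, cofactor_ne_zero, h.map_eval_multiplier, h.map_eval_remainder]
  have coe_prod := congrArg ((↑) : hahnIntegers ℚ L → HahnSeries ℚ L) hv
  push_cast at coe_prod
  rw [coe_prod, hτ, HahnSeries.single_pow, one_pow, mul_left_comm, ← value,
    ← lim0_single_mul (q := (N * (N - 1)) • e) value_ne_zero]
  push_cast
  rfl

end IsZeuthenDecomposition

end HahnIntegers

section SwapVariables

variable {A : Type*} [CommRing A]

/-- The inclusion `A⟦t⟧[x] → A[x]⟦t⟧`, which reads a polynomial in `x` over the power series in
`t` as a family of polynomials. -/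
def swapVars : Polynomial (PowerSeries A) →+* PowerSeries (Polynomial A) :=
  eval₂RingHom (PowerSeries.map C) (PowerSeries.C X)

lemma coeff_coeff_swapVars (Q : Polynomial (PowerSeries A)) (m k : ℕ) :
    (PowerSeries.coeff m (swapVars Q)).coeff k = PowerSeries.coeff m (Q.coeff k) := by
  induction Q using Polynomial.induction_on' with
  | add P Q hP hQ => simp only [map_add, coeff_add, hP, hQ]
  | monomial n a =>
    rw [swapVars, coe_eval₂RingHom, eval₂_monomial, ← map_pow, PowerSeries.coeff_mul_C,
      PowerSeries.coeff_map, coeff_C_mul_X_pow, coeff_monomial]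
    by_cases h : n = k
    · simp [h]
    · simp [h, Ne.symm h]

lemma swapVars_map_C (α : A[X]) : swapVars (α.map PowerSeries.C) = PowerSeries.C α := by
  ext m k
  rw [coeff_coeff_swapVars, coeff_map, PowerSeries.coeff_C, PowerSeries.coeff_C]
  split_ifs <;> simp

lemma swapVars_fam {n' : ℕ} {p : ℕ → A[X]} (hdeg : ∀ i, (p i).natDegree ≤ n') :
    swapVars (fam n' p) = PowerSeries.mk p := by
  ext m k
  simp only [coeff_coeff_swapVars, fam, finsetSum_coeff, coeff_C_mul_X_pow, sum_ite_eq, mem_range,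
    Nat.lt_succ_iff, PowerSeries.coeff_mk]
  split_ifs with h
  · rw [PowerSeries.coeff_mk]
  · rw [map_zero, coeff_eq_zero_of_natDegree_lt ((hdeg m).trans_lt (not_le.1 h))]

lemma exists_swapVars_eq_mk {p : ℕ → A[X]} {n : ℕ} (hp : ∀ i > n, p i = 0) :
    ∃ Q, swapVars Q = PowerSeries.mk p := by
  refine ⟨_, swapVars_fam (n' := (range (n + 1)).sup fun i => (p i).natDegree) fun i => ?_⟩
  rcases le_or_gt i n with hi | hi
  · exact le_sup (f := fun i => (p i).natDegree) (mem_range.2 (Nat.lt_succ_of_le hi))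
  · simp [hp i hi]

lemma exists_eq_C_X_pow_mul {Q : Polynomial (PowerSeries A)} {n : ℕ}
    (hQ : ∀ m < n, PowerSeries.coeff m (swapVars Q) = 0) :
    ∃ D, Q = C (PowerSeries.X ^ n) * D ∧
      D.map PowerSeries.constantCoeff = PowerSeries.coeff n (swapVars Q) := by
  obtain ⟨D, rfl⟩ : C (PowerSeries.X ^ n) ∣ Q := by
    refine C_dvd_iff_dvd_coeff _ _ |>.2 fun k => PowerSeries.X_pow_dvd_iff.2 fun m hm => ?_
    rw [← coeff_coeff_swapVars, hQ m hm, coeff_zero]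
  refine ⟨D, rfl, ext fun k => ?_⟩
  rw [coeff_coeff_swapVars, coeff_map, coeff_C_mul, PowerSeries.coeff_X_pow_mul', if_pos le_rfl,
    Nat.sub_self, PowerSeries.coeff_zero_eq_constantCoeff_apply]

lemma exists_map_C_mul_fam_eq {n' N n : ℕ} {p b : ℕ → A[X]} {α δ : A[X]}
    (hdeg : ∀ i, (p i).natDegree ≤ n') (hb : ∀ i > n, b i = 0)
    (h : ∀ i ≤ n, α * p i =
      PowerSeries.coeff i (PowerSeries.mk b ^ N) + if i = n then δ else 0) :
    ∃ B D, α.map PowerSeries.C * fam n' p = B ^ N + C (PowerSeries.X ^ n) * D ∧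
      D.map PowerSeries.constantCoeff = δ := by
  obtain ⟨B, hB⟩ := exists_swapVars_eq_mk hb
  have coeff_sub (i : ℕ) (hi : i ≤ n) :
      PowerSeries.coeff i (swapVars (α.map PowerSeries.C * fam n' p - B ^ N)) =
        if i = n then δ else 0 := by
    rw [map_sub, map_mul, map_pow, swapVars_map_C, swapVars_fam hdeg, hB, map_sub,
      PowerSeries.coeff_C_mul, PowerSeries.coeff_mk, h i hi, add_sub_cancel_left]
  obtain ⟨D, hD, hD₀⟩ := exists_eq_C_X_pow_mul fun m hm =>
    (coeff_sub m hm.le).trans (if_neg hm.ne)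
  exact ⟨B, D, eq_add_of_sub_eq' hD, by rw [hD₀, coeff_sub n le_rfl, if_pos rfl]⟩

end SwapVariables

section Families

variable {A L : Type*} [CommRing A] [Field L] {φ : A →+* L}

lemma HasConst.exists_hahnIntegers {s : HahnSeries ℚ L} {a : L} (h : HasConst s a) :
    ∃ S : hahnIntegers ℚ L, (S : HahnSeries ℚ L) = s ∧ constCoeff ℚ L S = a :=
  ⟨⟨s, mem_hahnIntegers_iff.2 h.2⟩, rfl, h.1⟩

lemma Phi_mem_hahnIntegers (f : PowerSeries A) : Phi φ f ∈ hahnIntegers ℚ L := by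
  refine mem_hahnIntegers_iff.2 fun q hq => HahnSeries.embDomain_of_notMem_range ?_
  rintro ⟨n, rfl⟩
  exact hq.not_ge n.cast_nonneg

variable (φ) in
/-- The ring map `Phi φ` with values in the valuation ring of the Hahn series. -/
def integralPhi : PowerSeries A →+* hahnIntegers ℚ L :=
  (Phi φ).codRestrict _ Phi_mem_hahnIntegers

lemma subtype_comp_integralPhi : (hahnIntegers ℚ L).subtype.comp (integralPhi φ) = Phi φ :=
  rfl

lemma constCoeff_integralPhi (f : PowerSeries A) :
    constCoeff ℚ L (integralPhi φ f) = φ (PowerSeries.constantCoeff f) := by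
  change (HahnSeries.ofPowerSeries ℚ L (PowerSeries.map φ f)).coeff 0 = _
  rw [← Nat.cast_zero, HahnSeries.ofPowerSeries_apply_coeff, PowerSeries.coeff_map,
    PowerSeries.coeff_zero_eq_constantCoeff_apply]

lemma constCoeff_eval_map_integralPhi (Q : Polynomial (PowerSeries A)) :
    constCoeff ℚ L ((Q.map (integralPhi φ)).eval 0) =
      φ ((Q.map PowerSeries.constantCoeff).eval 0) := by
  rw [← map_zero (integralPhi φ), eval_map_apply, constCoeff_integralPhi,
    ← map_zero (PowerSeries.constantCoeff (R := A)), eval_map_apply]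

variable (φ) in
lemma exists_root_integralPhi_X_pow (n : ℕ) {N : ℕ} (hN : N ≠ 0) :
    ∃ τ : hahnIntegers ℚ L, τ ^ N = integralPhi φ (PowerSeries.X ^ n) ∧
      (τ : HahnSeries ℚ L) = HahnSeries.single (n / N : ℚ) 1 := by
  have mem : HahnSeries.single (n / N : ℚ) (1 : L) ∈ hahnIntegers ℚ L :=
    mem_hahnIntegers_iff.2 fun q hq => HahnSeries.coeff_single_of_ne <|
      (hq.trans_le (by positivity)).ne
  refine ⟨⟨_, mem⟩, Subtype.ext ?_, rfl⟩
  change HahnSeries.single (n / N : ℚ) (1 : L) ^ N =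
    HahnSeries.ofPowerSeries ℚ L (PowerSeries.map φ (PowerSeries.X ^ n))
  rw [HahnSeries.single_pow, one_pow, map_pow, PowerSeries.map_X, HahnSeries.ofPowerSeries_X_pow,
    nsmul_eq_mul, mul_div_cancel₀ _ (Nat.cast_ne_zero.2 hN)]

lemma constCoeff_eval_zero_prod {m : ℕ} {d M : Fin m → ℕ} {g : Fin m → A[X]}
    {r : (j : Fin m) → Fin (d j) → L}
    {V : (j : Fin m) → Fin (d j) → Fin (M j) → hahnIntegers ℚ L}
    (hg : ∀ j, (g j).map φ = ∏ ℓ, (X - C (r j ℓ)))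
    (hV : ∀ j ℓ i, constCoeff ℚ L (V j ℓ i) = r j ℓ) :
    constCoeff ℚ L ((∏ j, ∏ ℓ, ∏ i, (X - C (V j ℓ i))).eval 0) =
      ∏ j, φ ((g j).eval 0) ^ M j := by
  simp only [eval_prod, eval_sub, eval_X, eval_C, map_prod, map_sub, map_zero, hV, prod_const]
  refine prod_congr rfl fun j _ => ?_
  rw [← eval_map_apply, hg]
  simp [eval_prod, prod_pow]

variable {n' N nd : ℕ} {p b : ℕ → A[X]} {α δ : A[X]} {S : Fin N → hahnIntegers ℚ L}
  {W : (hahnIntegers ℚ L)[X]}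

lemma exists_isZeuthenDecomposition (hN : N ≠ 0) (hdeg : ∀ i, (p i).natDegree ≤ n')
    (hS : ∀ i, constCoeff ℚ L (S i) = 0) (hW : constCoeff ℚ L (W.eval 0) ≠ 0)
    (hsplit : (fam n' p).map (integralPhi φ) = (∏ i, (X - C (S i))) * W)
    (hnd : nd ≠ 0) (hcop : φ ((α * δ).eval 0) ≠ 0) (hb : ∀ i > nd, b i = 0)
    (hZd : ∀ i ≤ nd, α * p i =
      PowerSeries.coeff i (PowerSeries.mk b ^ N) + if i = nd then δ else 0) :
    ∃ a B D τ, IsZeuthenDecomposition (constCoeff ℚ L) S W a B D τ ∧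
      constCoeff ℚ L (a.eval 0) = φ (α.eval 0) ∧ constCoeff ℚ L (D.eval 0) = φ (δ.eval 0) ∧
      (τ : HahnSeries ℚ L) = HahnSeries.single (nd / N : ℚ) 1 := by
  obtain ⟨B, D, hBD, hD⟩ := exists_map_C_mul_fam_eq hdeg hb hZd
  obtain ⟨τ, hτN, hτ⟩ := exists_root_integralPhi_X_pow φ nd hN
  have multiplier : constCoeff ℚ L (((α.map PowerSeries.C).map (integralPhi φ)).eval 0) =
      φ (α.eval 0) := by
    rw [constCoeff_eval_map_integralPhi, Polynomial.map_map, PowerSeries.constantCoeff_comp_C,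
      Polynomial.map_id]
  have remainder : constCoeff ℚ L ((D.map (integralPhi φ)).eval 0) = φ (δ.eval 0) := by
    rw [constCoeff_eval_map_integralPhi, hD]
  rw [eval_mul, map_mul] at hcop
  refine ⟨_, B.map (integralPhi φ), _, τ, ?_, multiplier, remainder, hτ⟩
  exact {
    map_root := hS
    scale_ne_zero := by
      rintro rfl
      exact HahnSeries.single_ne_zero one_ne_zero hτ.symm
    map_scale := by
      rw [← pow_eq_zero_iff hN, ← map_pow, hτN, constCoeff_integralPhi]
      simp [hnd]
    mul_eq := by
      rw [← hsplit, ← Polynomial.map_mul, hBD, hτN, Polynomial.map_add, Polynomial.map_mul,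
        Polynomial.map_pow, map_C]
    map_eval_cofactor := hW
    map_eval_multiplier := multiplier ▸ left_ne_zero_of_mul hcop
    map_eval_remainder := remainder ▸ right_ne_zero_of_mul hcop }

end Families

theorem stmt7_general {A L : Type*} [CommRing A] [Field L] (φ : A →+* L)
    (n' N : ℕ) (hN : (N : L) ≠ 0)
    (mg : ℕ) (g : Fin mg → Polynomial A) (Mg dg : Fin mg → ℕ)
    (rg : (j : Fin mg) → Fin (dg j) → L)
    (hgfac : ∀ j, (g j).map φ = ∏ ℓ, (X - C (rg j ℓ)))
    (hrg : ∀ j ℓ, rg j ℓ ≠ 0)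
    (p : ℕ → Polynomial A) (hdeg : ∀ i, (p i).natDegree ≤ n')
    (s : Fin N → HahnSeries ℚ L) (hs : ∀ i, HasConst (s i) 0)
    (w : (j : Fin mg) → Fin (dg j) → Fin (Mg j) → HahnSeries ℚ L)
    (hw : ∀ j ℓ i, HasConst (w j ℓ i) (rg j ℓ))
    (hsplit : (fam n' p).map (Phi φ) =
      (∏ i, (X - C (s i))) * ∏ j, ∏ ℓ, ∏ i, (X - C (w j ℓ i)))
    (α δp : Polynomial A) (β : ℕ → Polynomial A) (nd : ℕ) (hnd : 1 ≤ nd)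
    (hcop : φ ((α * δp).eval 0) ≠ 0)
    (hZd : ∀ i ≤ nd, α * p i =
      PowerSeries.coeff (R := Polynomial A) i
        ((PowerSeries.mk fun j =>
          if j = 0 then X * β 0 else if j < nd then β j else 0) ^ N) +
        (if i = nd then δp else 0)) :
    lim0 ((∏ j, ∏ ℓ, ∏ i, (HahnSeries.C (0 : L) - w j ℓ i)) ^ (2 * N - 2) *
        ∏ q ∈ Finset.univ.filter (fun q : Fin N × Fin N => q.1 < q.2),
          (s q.1 - s q.2) ^ 2) =
      (-1 : L) ^ (N * (N - 1) / 2) * (N : L) ^ N * φ (δp.eval 0) ^ (N - 1) *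
        (∏ j, φ ((g j).eval 0) ^ Mg j) ^ (N - 1) / φ (α.eval 0) ^ (N - 1) := by
  choose S hS hS₀ using fun i => (hs i).exists_hahnIntegers
  choose V hV hV₀ using fun j ℓ i => (hw j ℓ i).exists_hahnIntegers
  set W : (hahnIntegers ℚ L)[X] := ∏ j, ∏ ℓ, ∏ i, (X - C (V j ℓ i)) with hW
  have coe_eval_W : ((W.eval 0 : hahnIntegers ℚ L) : HahnSeries ℚ L) =
      ∏ j, ∏ ℓ, ∏ i, (HahnSeries.C (0 : L) - w j ℓ i) := by
    simp [hW, eval_prod, hV]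
  have constCoeff_eval_W : constCoeff ℚ L (W.eval 0) = ∏ j, φ ((g j).eval 0) ^ Mg j :=
    constCoeff_eval_zero_prod hgfac hV₀
  have eval_W_ne_zero : constCoeff ℚ L (W.eval 0) ≠ 0 := by
    simp [hW, eval_prod, prod_ne_zero_iff, hV₀, hrg]
  have split_integral : (fam n' p).map (integralPhi φ) = (∏ i, (X - C (S i))) * W := by
    refine Polynomial.map_injective (hahnIntegers ℚ L).subtype Subtype.val_injective ?_
    rw [Polynomial.map_map, subtype_comp_integralPhi]
    simp [hW, Polynomial.map_prod, hS, hV, hsplit]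
  have hN' : N ≠ 0 := by rintro rfl; simp at hN
  obtain ⟨a, B, D, τ, hdec, ha, hD, hτ⟩ := exists_isZeuthenDecomposition hN' hdeg hS₀
    eval_W_ne_zero split_integral (by omega) hcop (by grind) hZd
  rw [← coe_eval_W, ← constCoeff_eval_W, ← ha, ← hD, ← hdec.lim0_eq hN hτ]
  simp only [hS]

/-- **Lemma 3.6.**  Suppose the family `F(x,t) = Σ p_i(x) tⁱ`, with
`F_0 = x^N · ∏_j g_j^{M_j}` (the `g_j` pairwise coprime monic, coprime to `x`),
satisfies `(α, δ)`-Zd for the factor `f_ν = x`: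
`α·F = (x β₀ + β₁ t + ⋯ + β_{nd−1} t^{nd−1})^N + δ t^{nd} + O(t^{nd+1})` with
`gcd(αδ, x) = 1` (i.e. `(αδ)(0) ≠ 0`) and `N > 1`.  Then
`Δ(F,x)(0,t)_0 = (−1)^{N(N−1)/2} N^N δ(0)^{N−1} (∏_j g_j(0)^{M_j})^{N−1} / α(0)^{N−1}`. -/
theorem stmt7 {A L : Type*} [CommRing A] [IsDomain A]
    [Field L] [IsAlgClosed L] [CharZero L]
    (φ : A →+* L) (hφ : Function.Injective φ)
    (n' N : ℕ) (hN : 1 < N)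
    (mg : ℕ) (g : Fin mg → Polynomial A) (Mg dg : Fin mg → ℕ)
    (hgmonic : ∀ j, (g j).Monic)
    (rg : (j : Fin mg) → Fin (dg j) → L)
    (hgfac : ∀ j, (g j).map φ = ∏ ℓ, (X - C (rg j ℓ)))
    (hrg : ∀ j ℓ, rg j ℓ ≠ 0)
    (hrgInj : Function.Injective fun q : Σ j, Fin (dg j) => rg q.1 q.2)
    (p : ℕ → Polynomial A) (hdeg : ∀ i, (p i).natDegree ≤ n')
    (hF0 : p 0 = X ^ N * ∏ j, g j ^ Mg j)
    (s : Fin N → HahnSeries ℚ L) (hs : ∀ i, HasConst (s i) 0)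
    (w : (j : Fin mg) → Fin (dg j) → Fin (Mg j) → HahnSeries ℚ L)
    (hw : ∀ j ℓ i, HasConst (w j ℓ i) (rg j ℓ))
    (hsplit : (fam n' p).map (Phi φ) =
      (∏ i, (X - C (s i))) * ∏ j, ∏ ℓ, ∏ i, (X - C (w j ℓ i)))
    (α δp : Polynomial A) (β : ℕ → Polynomial A) (nd : ℕ) (hnd : 1 ≤ nd)
    (hcop : (α * δp).eval 0 ≠ 0)
    (hZd : ∀ i ≤ nd, α * p i =
      PowerSeries.coeff (R := Polynomial A) i
        ((PowerSeries.mk fun j =>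
          if j = 0 then X * β 0 else if j < nd then β j else 0) ^ N) +
        (if i = nd then δp else 0)) :
    lim0 ((∏ j, ∏ ℓ, ∏ i, (HahnSeries.C (0 : L) - w j ℓ i)) ^ (2 * N - 2) *
        ∏ q ∈ Finset.univ.filter (fun q : Fin N × Fin N => q.1 < q.2),
          (s q.1 - s q.2) ^ 2) =
      (-1 : L) ^ (N * (N - 1) / 2) * (N : L) ^ N * φ (δp.eval 0) ^ (N - 1) *
        (∏ j, φ ((g j).eval 0) ^ Mg j) ^ (N - 1) / φ (α.eval 0) ^ (N - 1) :=
  stmt7_general φ n' N (Nat.cast_ne_zero.2 (by omega)) mg g Mg dg rg hgfac hrg p hdeg s hs w hw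
    hsplit α δp β nd hnd ((map_ne_zero_iff φ hφ).2 hcop) hZd
end
end

section
/- Suppose the family F(x,t), with F_0 = ∏_ν f_ν^{n_ν} and each f_ν = ∏_{ℓ=1}^{d_ν} (x − a_{νℓ}) with all a_{νℓ} pairwise distinct, satisfies (α_ν, δ_{ν,n(ν)})-Zd for each f_ν with n_ν > 1, and suppose Δ_{A[[t]]}(F) ≠ 0. Then there exists a nonzero constant c ∈ k such that Δ_{A[[t]]}(F)_0 = ∏_ν Δ(f_ν)^{n_ν} · c · ∏_ν res(f_ν, δ_{ν,n(ν)}^{n_ν−1}) · ∏_ν ∏_{ν'≠ν} res(f_ν, f_{ν'})^{n_{ν'}} / ∏_ν res(f_ν, α_ν^{n_ν−1}). -/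
open Finset Polynomial

noncomputable section

/-!
Up to sign, the discriminant is the product of `F'(s)` over all `t`-roots `s`, so it is enough to
find the leading coefficient of each `F'(s)`. Let `s(0) = a`, where `f(a) = 0` and
`F₀ = f ^ N * M`. If `N = 1`, this coefficient is `f'(a) M(a)`.

If `N > 1`, write the Zeuthen decomposition as `α F = G ^ N + t ^ n Q` with `Q(x, 0) = δ`. At the
root, `G(s) ^ N = -t ^ n Q(s)`, so `G(s)` has order `n / N` and leading coefficient `w` with
`w ^ N = -δ(a)`. Since `(N - 1) n / N < n`, the leading term of `α(s) F'(s)` is that of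
`N G(s) ^ (N - 1) G'(s)`, with coefficient `N w ^ (N - 1) f'(a) β₀(a)`, and comparing the
decomposition with `F₀` at `t = 0` gives `β₀(a) ^ N = α(a) M(a)`. Over the `N` roots above `a`, the
product of the `w`'s is `δ(a)` up to a `2N`-th root of unity, which lies in `k` because `k` is
algebraically closed.
-/

theorem lim0_eq_leadingCoeff {L : Type*} [Field L] (x : HahnSeries ℚ L) :
    lim0 x = x.leadingCoeff :=
  HahnSeries.leadingCoeff_eq.symm

namespace HasConst

variable {L : Type*} [Field L] {x y : HahnSeries ℚ L} {a b : L}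

theorem iff_orderTop_sub_C_pos : HasConst x a ↔ 0 < (x - HahnSeries.C a).orderTop := by
  constructor
  · rintro ⟨h0, hneg⟩
    refine lt_of_not_ge fun hle => ?_
    obtain ⟨q, hq⟩ := WithTop.ne_top_iff_exists.1 (hle.trans_lt (WithTop.coe_lt_top 0)).ne
    refine HahnSeries.coeff_orderTop_ne hq.symm ?_
    rw [← hq, WithTop.coe_le_zero] at hle
    rcases hle.eq_or_lt with rfl | hlt
    · simp [h0]
    · simp [hneg q hlt, hlt.ne]
  · intro h
    have hcoeff : ∀ q ≤ (0 : ℚ), x.coeff q = (HahnSeries.C a : HahnSeries ℚ L).coeff q :=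
      fun q hq => sub_eq_zero.1 <| by
        rw [← HahnSeries.coeff_sub]
        exact HahnSeries.coeff_eq_zero_of_lt_orderTop ((WithTop.coe_le_coe.2 hq).trans_lt h)
    exact ⟨by simpa using hcoeff 0 le_rfl, fun q hq => by simpa [hq.ne] using hcoeff q hq.le⟩

theorem C (a : L) : HasConst (HahnSeries.C a) a :=
  iff_orderTop_sub_C_pos.2 (by simp)

theorem single {q : ℚ} (hq : 0 < q) (a : L) : HasConst (HahnSeries.single q a) 0 :=
  ⟨HahnSeries.coeff_single_of_ne hq.ne, fun _ hr => HahnSeries.coeff_single_of_ne (hr.trans hq).ne⟩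

theorem unique (ha : HasConst x a) (hb : HasConst x b) : a = b :=
  ha.1.symm.trans hb.1

theorem orderTop_nonneg (hx : HasConst x a) : 0 ≤ x.orderTop :=
  HahnSeries.le_orderTop_iff_forall.2 fun q hq => hx.2 q (WithTop.coe_lt_coe.1 hq)

theorem add (hx : HasConst x a) (hy : HasConst y b) : HasConst (x + y) (a + b) := by
  rw [iff_orderTop_sub_C_pos] at *
  rw [map_add, add_sub_add_comm]
  exact (lt_min hx hy).trans_le HahnSeries.min_orderTop_le_orderTop_add

theorem neg (hx : HasConst x a) : HasConst (-x) (-a) :=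
  ⟨by simp [hx.1], fun q hq => by simp [hx.2 q hq]⟩

theorem mul (hx : HasConst x a) (hy : HasConst y b) : HasConst (x * y) (a * b) := by
  have hx0 := hx.orderTop_nonneg
  have hb0 := (HasConst.C b).orderTop_nonneg
  rw [iff_orderTop_sub_C_pos] at *
  have hsplit : x * y - HahnSeries.C (a * b) =
      x * (y - HahnSeries.C b) + (x - HahnSeries.C a) * HahnSeries.C b := by
    rw [map_mul]; ring
  rw [hsplit]
  refine (lt_min ?_ ?_).trans_le HahnSeries.min_orderTop_le_orderTop_add <;>
    rw [HahnSeries.orderTop_mul]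
  · exact hy.trans_le (le_add_of_nonneg_left hx0)
  · exact hx.trans_le (le_add_of_nonneg_right hb0)

theorem pow (hx : HasConst x a) (n : ℕ) : HasConst (x ^ n) (a ^ n) := by
  induction n with
  | zero => simpa using HasConst.C (1 : L)
  | succ n ih => simpa only [pow_succ] using ih.mul hx

theorem order_eq_zero (hx : HasConst x a) (ha : a ≠ 0) : x.order = 0 :=
  le_antisymm (HahnSeries.order_le_of_coeff_ne_zero (hx.1.trans_ne ha))
    (HahnSeries.zero_le_orderTop_iff.1 hx.orderTop_nonneg)

theorem leadingCoeff_eq (hx : HasConst x a) (ha : a ≠ 0) : x.leadingCoeff = a := by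
  rw [HahnSeries.leadingCoeff_eq, hx.order_eq_zero ha, hx.1]

theorem of_order_eq_zero (hx : x.order = 0) : HasConst x x.leadingCoeff :=
  ⟨by rw [HahnSeries.leadingCoeff_eq, hx],
    fun _ hq => HahnSeries.coeff_eq_zero_of_lt_order (hq.trans_eq hx.symm)⟩

theorem exists_of_pow {n : ℕ} (hn : n ≠ 0) (hx : HasConst (x ^ n) a) (ha : a ≠ 0) :
    ∃ b, b ^ n = a ∧ HasConst x b := by
  have horder : x.order = 0 := by
    simpa [hn, HahnSeries.order_pow] using hx.order_eq_zero ha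
  have hxb := of_order_eq_zero horder
  exact ⟨_, (hxb.pow n).unique hx, hxb⟩

variable {A : Type*} [CommRing A] (φ : A →+* L)

theorem phi (f : PowerSeries A) :
    HasConst (Phi φ f) (φ (PowerSeries.constantCoeff f)) := by
  refine ⟨?_, fun q hq => ?_⟩
  · simpa [Phi] using
      HahnSeries.ofPowerSeries_apply_coeff (Γ := ℚ) (PowerSeries.map φ f) 0
  · rw [Phi, RingHom.comp_apply, HahnSeries.ofPowerSeries_apply]
    refine HahnSeries.embDomain_of_notMem_range ?_
    rintro ⟨n, rfl⟩
    exact hq.not_ge n.cast_nonneg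

theorem eval₂_phi (hx : HasConst x a) (P : (PowerSeries A)[X]) :
    HasConst (P.eval₂ (Phi φ) x) ((P.map PowerSeries.constantCoeff).eval₂ φ a) := by
  induction P using Polynomial.induction_on' with
  | add P Q hP hQ => simpa using hP.add hQ
  | monomial n f => simpa [eval₂_monomial] using (HasConst.phi φ f).mul (hx.pow n)

end HasConst

theorem phi_X_pow {A L : Type*} [CommRing A] [Field L] (φ : A →+* L) (n : ℕ) :
    Phi φ (PowerSeries.X ^ n) = HahnSeries.single (n : ℚ) 1 := by
  rw [Phi, RingHom.comp_apply, map_pow, PowerSeries.map_X, HahnSeries.ofPowerSeries_X_pow]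

/- `u`, `v`, `u'`, `v'` are to be the values at a root of `G`, `Q`, `G'`, `Q'`, where
`α F = G ^ N + t ^ q Q`. -/
theorem exists_leadingCoeff_of_pow_add_single_mul_eq_zero {L : Type*} [Field L]
    {q : ℚ} (hq : 0 < q) {N : ℕ} (hN : (N : L) ≠ 0) {u v u' v' : HahnSeries ℚ L} {δ g h : L}
    (hv : HasConst v δ) (hδ : δ ≠ 0) (hu' : HasConst u' g) (hg : g ≠ 0) (hv' : HasConst v' h)
    (huv : u ^ N + HahnSeries.single q 1 * v = 0) :
    ∃ w : L, w ^ N = -δ ∧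
      ((N : HahnSeries ℚ L) * u ^ (N - 1) * u' + HahnSeries.single q 1 * v').leadingCoeff =
        N * w ^ (N - 1) * g := by
  have hN0 : N ≠ 0 := by rintro rfl; simp at hN
  set θ : HahnSeries ℚ L := HahnSeries.single (q / N) 1 with hθ
  have hθN : HahnSeries.single q 1 = θ ^ N := by
    rw [hθ, HahnSeries.single_pow, one_pow, nsmul_eq_mul, mul_div_cancel₀ _ (by exact_mod_cast hN0)]
  have hθ0 : θ ≠ 0 := by simp [hθ]
  obtain ⟨y, rfl⟩ : ∃ y, u = θ * y := ⟨u / θ, (mul_div_cancel₀ u hθ0).symm⟩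
  have hyN : y ^ N = -v := by
    refine mul_left_cancel₀ (pow_ne_zero N hθ0) ?_
    linear_combination huv - v * hθN
  obtain ⟨w, hw, hyw⟩ := HasConst.exists_of_pow hN0 (hyN ▸ hv.neg) (neg_ne_zero.2 hδ)
  refine ⟨w, hw, ?_⟩
  have hfactor : (N : HahnSeries ℚ L) * (θ * y) ^ (N - 1) * u' + HahnSeries.single q 1 * v' =
      θ ^ (N - 1) * (HahnSeries.C (N : L) * y ^ (N - 1) * u' + θ * v') := by
    rw [hθN, ← pow_sub_one_mul hN0 θ, map_natCast]
    ring
  have hθconst : HasConst θ 0 := HasConst.single (by positivity) 1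
  have hconst := (((HasConst.C (N : L)).mul (hyw.pow (N - 1))).mul hu').add (hθconst.mul hv')
  rw [zero_mul, add_zero] at hconst
  have hw0 : w ≠ 0 := fun h0 => neg_ne_zero.2 hδ (by rw [← hw, h0, zero_pow hN0])
  have hlead := hconst.leadingCoeff_eq (mul_ne_zero (mul_ne_zero hN (pow_ne_zero _ hw0)) hg)
  rw [hfactor, HahnSeries.leadingCoeff_mul, hlead, hθ, HahnSeries.single_pow, one_pow,
    HahnSeries.leadingCoeff_of_single, one_mul]

section ZeuthenExpansion

variable {A : Type*} [CommRing A]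

/-- The inclusion `A[[t]][x] → A[x][[t]]`, which lets a family be expanded in powers of `t`. -/
def polyToPowerSeries : (PowerSeries A)[X] →+* PowerSeries A[X] :=
  eval₂RingHom (PowerSeries.map C) (PowerSeries.C X)

theorem coeff_coeff_polyToPowerSeries (P : (PowerSeries A)[X]) (i j : ℕ) :
    (PowerSeries.coeff i (polyToPowerSeries P)).coeff j = PowerSeries.coeff i (P.coeff j) := by
  induction P using Polynomial.induction_on' with
  | add P Q hP hQ => simp [hP, hQ]
  | monomial n f =>
    rw [polyToPowerSeries, coe_eval₂RingHom, eval₂_monomial, ← map_pow, PowerSeries.coeff_mul_C,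
      PowerSeries.coeff_map, coeff_C_mul_X_pow, coeff_monomial]
    split_ifs with h₁ h₂ <;> simp_all

theorem polyToPowerSeries_C (f : PowerSeries A) :
    polyToPowerSeries (C f) = PowerSeries.map C f := by
  simp [polyToPowerSeries]

theorem polyToPowerSeries_map_C (g : A[X]) :
    polyToPowerSeries (g.map PowerSeries.C) = PowerSeries.C g := by
  ext i j
  rw [coeff_coeff_polyToPowerSeries, coeff_map, PowerSeries.coeff_C, PowerSeries.coeff_C]
  split_ifs <;> simp

theorem map_C_map_constantCoeff (g : A[X]) :
    (g.map PowerSeries.C).map (PowerSeries.constantCoeff (R := A)) = g := by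
  ext j
  simp

theorem constantCoeff_polyToPowerSeries (P : (PowerSeries A)[X]) :
    PowerSeries.constantCoeff (polyToPowerSeries P) = P.map PowerSeries.constantCoeff := by
  ext j
  simp only [← PowerSeries.coeff_zero_eq_constantCoeff_apply, coeff_coeff_polyToPowerSeries,
    coeff_map]

theorem C_X_pow_dvd_of_coeff_polyToPowerSeries {P : (PowerSeries A)[X]} {n : ℕ}
    (h : ∀ i < n, PowerSeries.coeff i (polyToPowerSeries P) = 0) :
    C (PowerSeries.X ^ n) ∣ P := by
  refine (C_dvd_iff_dvd_coeff _ _).2 fun j => PowerSeries.X_pow_dvd_iff.2 fun i hi => ?_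
  rw [← coeff_coeff_polyToPowerSeries, h i hi, coeff_zero]

theorem polyToPowerSeries_fam {n' : ℕ} {p : ℕ → A[X]} (hdeg : ∀ i, (p i).natDegree ≤ n') :
    polyToPowerSeries (fam n' p) = PowerSeries.mk p := by
  ext i j
  rw [coeff_coeff_polyToPowerSeries, PowerSeries.coeff_mk, fam, finsetSum_coeff]
  simp only [coeff_C_mul_X_pow, Finset.sum_ite_eq, Finset.mem_range, Nat.lt_succ_iff]
  split_ifs with hj
  · rw [PowerSeries.coeff_mk]
  · rw [map_zero, coeff_eq_zero_of_natDegree_lt ((hdeg i).trans_lt (not_le.1 hj))]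

theorem fam_map_constantCoeff {n' : ℕ} {p : ℕ → A[X]} (hdeg : ∀ i, (p i).natDegree ≤ n') :
    (fam n' p).map PowerSeries.constantCoeff = p 0 := by
  rw [← constantCoeff_polyToPowerSeries, polyToPowerSeries_fam hdeg,
    PowerSeries.constantCoeff_mk]

theorem exists_polyToPowerSeries_eq_mk {c : ℕ → A[X]} {n : ℕ} (hc : ∀ j ≥ n, c j = 0) :
    ∃ G, polyToPowerSeries G = PowerSeries.mk c := by
  refine ⟨fam ((Finset.range n).sup fun j => (c j).natDegree) c, polyToPowerSeries_fam fun j => ?_⟩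
  rcases lt_or_ge j n with hj | hj
  · exact Finset.le_sup (f := fun j => (c j).natDegree) (Finset.mem_range.2 hj)
  · simp [hc j hj]

/-- The coefficients of the base `f β₀ + β₁ t + ⋯ + β_{n-1} t^(n-1)` of a Zeuthen decomposition. -/
def zeuthenBase (f : A[X]) (β : ℕ → A[X]) (n : ℕ) : ℕ → A[X] := fun j =>
  if j = 0 then f * β 0 else if j < n then β j else 0

/-- The expansion `α F = (f β₀ + ⋯ + β_{n-1} t^(n-1))^N + δ t^n + O(t^(n+1))` of an `(α, δ)`-Zeuthen
decomposition of `F = ∑ pᵢ tⁱ`, coefficient by coefficient. The coprimality of `α δ` with `f` is not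
part of this definition; it is stated separately, as nonvanishing at the roots of `f`. -/
def IsZeuthenExpansion (p : ℕ → A[X]) (f α δ : A[X]) (β : ℕ → A[X]) (n N : ℕ) : Prop :=
  ∀ i ≤ n, α * p i = PowerSeries.coeff (R := A[X]) i (PowerSeries.mk (zeuthenBase f β n) ^ N) +
    if i = n then δ else 0

namespace IsZeuthenExpansion

variable {p : ℕ → A[X]} {f α δ : A[X]} {β : ℕ → A[X]} {n N : ℕ}

theorem exists_eq_pow_add (h : IsZeuthenExpansion p f α δ β n N) (hn : 0 < n) {n' : ℕ}
    (hdeg : ∀ i, (p i).natDegree ≤ n') :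
    ∃ G Q : (PowerSeries A)[X], G.map PowerSeries.constantCoeff = f * β 0 ∧
      Q.map PowerSeries.constantCoeff = δ ∧
      α.map PowerSeries.C * fam n' p = G ^ N + C (PowerSeries.X ^ n) * Q := by
  have hbase : ∀ j ≥ n, zeuthenBase f β n j = 0 := fun j hj => by
    simp [zeuthenBase, (hn.trans_le hj).ne', hj.not_gt]
  obtain ⟨G, hG⟩ := exists_polyToPowerSeries_eq_mk hbase
  set P := α.map PowerSeries.C * fam n' p - G ^ N with hP
  have hcoeff : ∀ i ≤ n, PowerSeries.coeff i (polyToPowerSeries P) = if i = n then δ else 0 :=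
    fun i hi => by
      rw [hP, map_sub, map_mul, map_pow, hG, polyToPowerSeries_map_C, polyToPowerSeries_fam hdeg,
        map_sub, PowerSeries.coeff_C_mul, PowerSeries.coeff_mk, h i hi, add_sub_cancel_left]
  obtain ⟨Q, hQ⟩ := C_X_pow_dvd_of_coeff_polyToPowerSeries fun i (hi : i < n) => by
    rw [hcoeff i hi.le, if_neg hi.ne]
  refine ⟨G, Q, ?_, ?_, eq_add_of_sub_eq' hQ⟩
  · rw [← constantCoeff_polyToPowerSeries, hG, PowerSeries.constantCoeff_mk, zeuthenBase,
      if_pos rfl]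
  · have hcoeff_n := hcoeff n le_rfl
    rw [hQ, map_mul, polyToPowerSeries_C, map_pow, PowerSeries.map_X, PowerSeries.coeff_X_pow_mul',
      if_pos le_rfl, if_pos rfl, Nat.sub_self, PowerSeries.coeff_zero_eq_constantCoeff_apply,
      constantCoeff_polyToPowerSeries] at hcoeff_n
    exact hcoeff_n

theorem pow_eq_mul_cofactor (h : IsZeuthenExpansion p f α δ β n N) (hn : 0 < n) (hf : f.Monic)
    {M : A[X]} (hp0 : p 0 = f ^ N * M) : β 0 ^ N = α * M := by
  have h0 := h 0 hn.le
  rw [if_neg hn.ne, PowerSeries.coeff_zero_eq_constantCoeff_apply, map_pow,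
    PowerSeries.constantCoeff_mk, zeuthenBase, if_pos rfl, add_zero, hp0, mul_pow] at h0
  refine (hf.pow N).isRegular.left ?_
  linear_combination -h0

end IsZeuthenExpansion

end ZeuthenExpansion

section RootsOfUnity

variable {k L : Type*} [Field k] [IsAlgClosed k] [Field L] (κ : k →+* L)

theorem exists_map_eq_of_pow_eq_one {n : ℕ} (hn : 0 < n) {z : L} (hz : z ^ n = 1) : ∃ c, κ c = z :=
  (IsAlgClosed.splits (X ^ n - 1 : k[X])).mem_range_of_isRoot (X_pow_sub_C_ne_zero hn 1)
    (by simp [hz])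

theorem exists_prod_eq_map_mul_of_pow_eq_neg {N : ℕ} (hN : 0 < N) {w : Fin N → L} {δ : L}
    (hδ : δ ≠ 0) (hw : ∀ i, w i ^ N = -δ) : ∃ c, c ≠ 0 ∧ ∏ i, w i = κ c * δ := by
  have hprod : (∏ i, w i) ^ N = (-δ) ^ N := by simp [← Finset.prod_pow, hw]
  have hunity : ((∏ i, w i) / δ) ^ (N * 2) = 1 := by
    rw [pow_mul, div_pow, hprod, ← div_pow, neg_div, div_self hδ, ← pow_mul, mul_comm, pow_mul,
      neg_one_sq, one_pow]
  obtain ⟨c, hc⟩ := exists_map_eq_of_pow_eq_one κ (by positivity) hunity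
  refine ⟨c, ?_, by rw [hc, div_mul_cancel₀ _ hδ]⟩
  rintro rfl
  rw [← hc, map_zero, zero_pow (by positivity)] at hunity
  exact zero_ne_one hunity

end RootsOfUnity

section LocalContribution

variable {A L : Type*} [CommRing A] [Field L] {φ : A →+* L} {a : L}

theorem leadingCoeff_eval₂_derivative_of_simple_root {F : (PowerSeries A)[X]}
    {s : HahnSeries ℚ L} (hs : HasConst s a) {f M : A[X]}
    (hF : F.map PowerSeries.constantCoeff = f * M) (hfa : f.eval₂ φ a = 0)
    (hf' : f.derivative.eval₂ φ a ≠ 0) (hMa : M.eval₂ φ a ≠ 0) :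
    (F.derivative.eval₂ (Phi φ) s).leadingCoeff =
      f.derivative.eval₂ φ a * M.eval₂ φ a := by
  have h := hs.eval₂_phi φ F.derivative
  rw [← derivative_map, hF, derivative_mul, eval₂_add, eval₂_mul, eval₂_mul, hfa, zero_mul,
    add_zero] at h
  exact h.leadingCoeff_eq (mul_ne_zero hf' hMa)

theorem exists_leadingCoeff_eval₂_derivative_of_eq_pow_add {F G Q : (PowerSeries A)[X]}
    {f b α δ : A[X]} {n N : ℕ} (hG : G.map PowerSeries.constantCoeff = f * b)
    (hQ : Q.map PowerSeries.constantCoeff = δ)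
    (hexp : α.map PowerSeries.C * F = G ^ N + C (PowerSeries.X ^ n) * Q)
    (hn : 0 < n) (hN : (N : L) ≠ 0) {s : HahnSeries ℚ L} (hs : HasConst s a)
    (hFs : F.eval₂ (Phi φ) s = 0) (hfa : f.eval₂ φ a = 0) (hf' : f.derivative.eval₂ φ a ≠ 0)
    (hba : b.eval₂ φ a ≠ 0) (hαa : α.eval₂ φ a ≠ 0) (hδa : δ.eval₂ φ a ≠ 0) :
    ∃ w : L, w ^ N = -δ.eval₂ φ a ∧
      α.eval₂ φ a * (F.derivative.eval₂ (Phi φ) s).leadingCoeff =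
        N * w ^ (N - 1) * (f.derivative.eval₂ φ a * b.eval₂ φ a) := by
  have hQs := hs.eval₂_phi φ Q
  rw [hQ] at hQs
  have hG's := hs.eval₂_phi φ G.derivative
  rw [← derivative_map, hG, derivative_mul, eval₂_add, eval₂_mul, eval₂_mul, hfa, zero_mul,
    add_zero] at hG's
  have hαs := hs.eval₂_phi φ (α.map PowerSeries.C)
  rw [map_C_map_constantCoeff] at hαs
  have hroot := congrArg (eval₂ (Phi φ) s) hexp
  rw [eval₂_mul, hFs, mul_zero, eval₂_add, eval₂_pow, eval₂_mul, eval₂_C, phi_X_pow] at hroot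
  have hderiv := congrArg (fun P => P.derivative.eval₂ (Phi φ) s) hexp
  simp only [derivative_mul, derivative_add, derivative_pow, derivative_C, eval₂_mul, eval₂_add,
    eval₂_pow, eval₂_C, map_natCast, eval₂_natCast, hFs, phi_X_pow, mul_zero, zero_mul,
    zero_add] at hderiv
  obtain ⟨w, hw, hlead⟩ := exists_leadingCoeff_of_pow_add_single_mul_eq_zero
    (by exact_mod_cast hn : (0 : ℚ) < n) hN hQs hδa hG's (mul_ne_zero hf' hba)
    (hs.eval₂_phi φ Q.derivative) hroot.symm
  refine ⟨w, hw, ?_⟩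
  rw [← hαs.leadingCoeff_eq hαa, ← HahnSeries.leadingCoeff_mul, hderiv, hlead]

variable {k : Type*} [Field k] [IsAlgClosed k] [CharZero L] (κ : k →+* L)
  {n' : ℕ} {p : ℕ → A[X]} {f M α δ : A[X]} {β : ℕ → A[X]} {n N : ℕ}

theorem IsZeuthenExpansion.exists_prod_leadingCoeff_at_root
    (h : IsZeuthenExpansion p f α δ β n N) (hn : 0 < n) (hN : 0 < N)
    (hdeg : ∀ i, (p i).natDegree ≤ n') (hf : f.Monic) (hp0 : p 0 = f ^ N * M)
    {s : Fin N → HahnSeries ℚ L} (hs : ∀ i, HasConst (s i) a)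
    (hroot : ∀ i, (fam n' p).eval₂ (Phi φ) (s i) = 0) (hfa : f.eval₂ φ a = 0)
    (hf' : f.derivative.eval₂ φ a ≠ 0) (hMa : M.eval₂ φ a ≠ 0) (hαδ : (α * δ).eval₂ φ a ≠ 0) :
    ∃ c : k, c ≠ 0 ∧ ∏ i, ((fam n' p).derivative.eval₂ (Phi φ) (s i)).leadingCoeff =
      κ c * f.derivative.eval₂ φ a ^ N * δ.eval₂ φ a ^ (N - 1) * M.eval₂ φ a /
        α.eval₂ φ a ^ (N - 1) := by
  rw [eval₂_mul] at hαδ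
  have hαa := left_ne_zero_of_mul hαδ
  have hδa := right_ne_zero_of_mul hαδ
  have hβ : (β 0).eval₂ φ a ^ N = α.eval₂ φ a * M.eval₂ φ a := by
    rw [← eval₂_pow, h.pow_eq_mul_cofactor hn hf hp0, eval₂_mul]
  have hβa : (β 0).eval₂ φ a ≠ 0 := fun h0 =>
    mul_ne_zero hαa hMa (by rw [← hβ, h0, zero_pow hN.ne'])
  obtain ⟨G, Q, hG, hQ, hexp⟩ := h.exists_eq_pow_add hn hdeg
  have hNL : (N : L) ≠ 0 := Nat.cast_ne_zero.2 hN.ne'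
  choose w hw hlead using fun i => exists_leadingCoeff_eval₂_derivative_of_eq_pow_add hG hQ hexp hn
    hNL (hs i) (hroot i) hfa hf' hβa hαa hδa
  obtain ⟨c, hc, hprod⟩ := exists_prod_eq_map_mul_of_pow_eq_neg κ hN hδa hw
  have hNk : (N : k) ≠ 0 := fun h0 => hNL (by rw [← map_natCast κ, h0, map_zero])
  refine ⟨N ^ N * c ^ (N - 1), mul_ne_zero (pow_ne_zero _ hNk) (pow_ne_zero _ hc), ?_⟩
  have hmul : α.eval₂ φ a ^ N *
      ∏ i, ((fam n' p).derivative.eval₂ (Phi φ) (s i)).leadingCoeff =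
        N ^ N * (κ c * δ.eval₂ φ a) ^ (N - 1) *
          (f.derivative.eval₂ φ a ^ N * (α.eval₂ φ a * M.eval₂ φ a)) := by
    rw [← hprod, ← hβ, ← Finset.prod_pow, ← mul_pow _ _ N]
    simpa [Finset.prod_mul_distrib] using Finset.prod_congr rfl fun i (_ : i ∈ univ) => hlead i
  rw [eq_div_iff (pow_ne_zero _ hαa)]
  refine mul_left_cancel₀ hαa ?_
  rw [← pow_sub_one_mul hN.ne' (α.eval₂ φ a)] at hmul
  simp only [map_mul, map_pow, map_natCast]
  linear_combination hmul

theorem exists_prod_leadingCoeff_at_root (hN : 0 < N)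
    (hdeg : ∀ i, (p i).natDegree ≤ n') (hf : f.Monic) (hp0 : p 0 = f ^ N * M)
    {s : Fin N → HahnSeries ℚ L} (hs : ∀ i, HasConst (s i) a)
    (hroot : ∀ i, (fam n' p).eval₂ (Phi φ) (s i) = 0) (hfa : f.eval₂ φ a = 0)
    (hf' : f.derivative.eval₂ φ a ≠ 0) (hMa : M.eval₂ φ a ≠ 0)
    (hZd : 1 < N → 0 < n ∧ (α * δ).eval₂ φ a ≠ 0 ∧ IsZeuthenExpansion p f α δ β n N) :
    ∃ c : k, c ≠ 0 ∧ ∏ i, ((fam n' p).derivative.eval₂ (Phi φ) (s i)).leadingCoeff =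
      κ c * f.derivative.eval₂ φ a ^ N * δ.eval₂ φ a ^ (N - 1) * M.eval₂ φ a /
        α.eval₂ φ a ^ (N - 1) := by
  rcases (Nat.one_le_iff_ne_zero.2 hN.ne').eq_or_lt with rfl | hN1
  · rw [pow_one] at hp0
    refine ⟨1, one_ne_zero, ?_⟩
    simp [leadingCoeff_eval₂_derivative_of_simple_root (hs 0)
      ((fam_map_constantCoeff hdeg).trans hp0) hfa hf' hMa]
  · obtain ⟨hn, hαδ, hexp⟩ := hZd hN1
    exact hexp.exists_prod_leadingCoeff_at_root κ hn hN hdeg hf hp0 hs hroot hfa hf' hMa hαδ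

end LocalContribution

section RootProducts

theorem hahnSeries_leadingCoeff_prod {Γ R τ : Type*} [AddCommMonoid Γ] [LinearOrder Γ]
    [IsOrderedCancelAddMonoid Γ] [CommSemiring R] [NoZeroDivisors R] (t : Finset τ)
    (x : τ → HahnSeries Γ R) :
    (∏ i ∈ t, x i).leadingCoeff = ∏ i ∈ t, (x i).leadingCoeff :=
  map_prod (⟨⟨HahnSeries.leadingCoeff, HahnSeries.leadingCoeff_one⟩,
    fun x y => HahnSeries.leadingCoeff_mul x y⟩ : HahnSeries Γ R →* R) x t

theorem prod_offDiag_sub_eq_prod_eval₂_derivative {B R τ : Type*} [CommRing B] [CommRing R]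
    [Fintype τ] {ψ : B →+* R} {P : B[X]} {S : τ → R}
    (hP : P.map ψ = ∏ i, (X - C (S i))) :
    ∏ q ∈ univ.offDiag, (S q.1 - S q.2) = ∏ i, P.derivative.eval₂ ψ (S i) := by
  classical
  rw [Finset.prod_finset_product (univ : Finset τ).offDiag univ (fun i => univ.erase i)
    (by simp [eq_comm])]
  refine Finset.prod_congr rfl fun i _ => ?_
  rw [← eval_map, ← derivative_map, hP, ← Lagrange.nodal_eq,
    Lagrange.eval_nodal_derivative_eval_node_eq (mem_univ i), Lagrange.eval_nodal]

theorem prod_offDiag_sub_eq_discOf {L : Type*} [Field L] {d : ℕ} (a : Fin d → L) :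
    ∏ q ∈ univ.offDiag, (a q.1 - a q.2) =
      (-1) ^ #{q : Fin d × Fin d | q.1 < q.2} * discOf a := by
  rw [← Finset.prod_filter_mul_prod_filter_not _ (fun q : Fin d × Fin d => q.1 < q.2)]
  have hlt : (univ : Finset (Fin d)).offDiag.filter (fun q => q.1 < q.2) =
      univ.filter fun q => q.1 < q.2 := by
    ext q; simpa using ne_of_lt
  have hgt : ∏ q ∈ (univ : Finset (Fin d)).offDiag with ¬q.1 < q.2, (a q.1 - a q.2) =
      ∏ q : Fin d × Fin d with q.1 < q.2, (a q.2 - a q.1) := by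
    refine Finset.prod_nbij' Prod.swap Prod.swap ?_ ?_ ?_ ?_ ?_ <;> grind
  rw [hlt, hgt, discOf, ← Finset.prod_const, ← Finset.prod_mul_distrib, ← Finset.prod_mul_distrib]
  exact Finset.prod_congr rfl fun q _ => by ring

variable {A L : Type*} [CommRing A] [Field L] {φ : A →+* L}

theorem eval₂_eq_prod_sub {τ : Type*} [Fintype τ] {f : A[X]} {a : τ → L}
    (hf : f.map φ = ∏ i, (X - C (a i))) (x : L) : f.eval₂ φ x = ∏ i, (x - a i) := by
  rw [← eval_map, hf, eval_prod]
  simp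

theorem eval₂_derivative_ne_zero_of_injective {τ : Type*} [Fintype τ] {f : A[X]} {a : τ → L}
    (hf : f.map φ = ∏ i, (X - C (a i))) (ha : Function.Injective a) {i : τ} :
    f.derivative.eval₂ φ (a i) ≠ 0 := by
  have hsep : (f.map φ).Separable := hf ▸ separable_prod_X_sub_C_iff.2 ha
  have hroot : (f.map φ).eval₂ (RingHom.id L) (a i) = 0 := by
    rw [eval₂_id, eval_map, eval₂_eq_prod_sub hf]
    exact Finset.prod_eq_zero (mem_univ i) (sub_self _)
  simpa [derivative_map, eval_map] using hsep.eval₂_derivative_ne_zero _ hroot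

variable {ι : Type*} [Fintype ι] [DecidableEq ι] {d nn : ι → ℕ} {a : (ν : ι) → Fin (d ν) → L}
  {f : ι → A[X]}

theorem eval₂_prod_erase (hf : ∀ ν, (f ν).map φ = ∏ ℓ, (X - C (a ν ℓ))) (ν : ι) (x : L) :
    (∏ ν' ∈ univ.erase ν, f ν' ^ nn ν').eval₂ φ x =
      ∏ ν' ∈ univ.erase ν, (∏ ℓ', (x - a ν' ℓ')) ^ nn ν' := by
  simp only [eval₂_finsetProd, eval₂_pow, eval₂_eq_prod_sub (hf _)]

theorem eval₂_prod_erase_ne_zero (hf : ∀ ν, (f ν).map φ = ∏ ℓ, (X - C (a ν ℓ)))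
    (ha : Function.Injective fun q : Σ ν, Fin (d ν) => a q.1 q.2) (ν : ι) (ℓ : Fin (d ν)) :
    (∏ ν' ∈ univ.erase ν, f ν' ^ nn ν').eval₂ φ (a ν ℓ) ≠ 0 := by
  rw [eval₂_prod_erase hf]
  refine Finset.prod_ne_zero_iff.2 fun ν' hν' => pow_ne_zero _ <|
    Finset.prod_ne_zero_iff.2 fun ℓ' _ => sub_ne_zero.2 fun h => ne_of_mem_erase hν' ?_
  exact (congrArg Sigma.fst (@ha ⟨ν, ℓ⟩ ⟨ν', ℓ'⟩ h)).symm

end RootProducts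

theorem exists_prod_leadingCoeff_at_factor {k A L : Type*} [Field k] [IsAlgClosed k] [CommRing A]
    [Field L] [CharZero L] (κ : k →+* L) {φ : A →+* L} {n' : ℕ} {p : ℕ → A[X]}
    (hdeg : ∀ i, (p i).natDegree ≤ n') {f M α δ : A[X]} {β : ℕ → A[X]} {n N d : ℕ} (hN : 0 < N)
    (hf : f.Monic) (hp0 : p 0 = f ^ N * M) {a : Fin d → L} (ha : Function.Injective a)
    (hfac : f.map φ = ∏ ℓ, (X - C (a ℓ))) (hMa : ∀ ℓ, M.eval₂ φ (a ℓ) ≠ 0)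
    {s : Fin d → Fin N → HahnSeries ℚ L} (hs : ∀ ℓ i, HasConst (s ℓ i) (a ℓ))
    (hroot : ∀ ℓ i, (fam n' p).eval₂ (Phi φ) (s ℓ i) = 0)
    (hZd : 1 < N → 0 < n ∧ (∀ ℓ, (α * δ).eval₂ φ (a ℓ) ≠ 0) ∧
      IsZeuthenExpansion p f α δ β n N) :
    ∃ c : k, c ≠ 0 ∧
      ∏ ℓ, ∏ i, ((fam n' p).derivative.eval₂ (Phi φ) (s ℓ i)).leadingCoeff =
        κ c * discOf a ^ N * (∏ ℓ, δ.eval₂ φ (a ℓ) ^ (N - 1)) * (∏ ℓ, M.eval₂ φ (a ℓ)) /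
          ∏ ℓ, α.eval₂ φ (a ℓ) ^ (N - 1) := by
  have hfa : ∀ ℓ, f.eval₂ φ (a ℓ) = 0 := fun ℓ => by
    rw [eval₂_eq_prod_sub hfac]
    exact Finset.prod_eq_zero (mem_univ ℓ) (sub_self _)
  choose c hc0 hc using fun ℓ => exists_prod_leadingCoeff_at_root κ hN hdeg hf hp0 (hs ℓ)
    (hroot ℓ) (hfa ℓ) (eval₂_derivative_ne_zero_of_injective hfac ha) (hMa ℓ)
    fun h1 => ⟨(hZd h1).1, (hZd h1).2.1 ℓ, (hZd h1).2.2⟩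
  set e := #{q : Fin d × Fin d | q.1 < q.2}
  have hdisc : ∏ ℓ, f.derivative.eval₂ φ (a ℓ) ^ N = ((-1) ^ e * discOf a) ^ N := by
    rw [Finset.prod_pow, ← prod_offDiag_sub_eq_prod_eval₂_derivative hfac,
      prod_offDiag_sub_eq_discOf]
  refine ⟨(∏ ℓ, c ℓ) * ((-1) ^ e) ^ N,
    mul_ne_zero (Finset.prod_ne_zero_iff.2 fun ℓ _ => hc0 ℓ) (by simp), ?_⟩
  simp only [hc, Finset.prod_div_distrib, Finset.prod_mul_distrib, hdisc, map_mul, map_prod,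
    map_pow, map_neg, map_one]
  ring

theorem stmt9_general {k A L : Type*} [Field k] [IsAlgClosed k] [CommRing A] [Field L] [CharZero L]
    (κ : k →+* L) (φ : A →+* L)
    (n' : ℕ) (p : ℕ → A[X]) (hdeg : ∀ i, (p i).natDegree ≤ n')
    {ι : Type*} [Fintype ι] [DecidableEq ι] (d nn : ι → ℕ) (hnn : ∀ ν, 0 < nn ν)
    (a : (ν : ι) → Fin (d ν) → L)
    (ha : Function.Injective fun q : Σ ν, Fin (d ν) => a q.1 q.2)
    (fp : ι → A[X]) (hfmonic : ∀ ν, (fp ν).Monic)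
    (hffac : ∀ ν, (fp ν).map φ = ∏ ℓ, (X - C (a ν ℓ)))
    (hF0 : p 0 = ∏ ν, fp ν ^ nn ν)
    (s : (ν : ι) → (ℓ : Fin (d ν)) → Fin (nn ν) → HahnSeries ℚ L)
    (hs : ∀ ν ℓ i, HasConst (s ν ℓ i) (a ν ℓ))
    (hsplit : (fam n' p).map (Phi φ) = ∏ ν, ∏ ℓ, ∏ i, (X - C (s ν ℓ i)))
    (αp δp : ι → A[X]) (β : ι → ℕ → A[X]) (nd : ι → ℕ)
    (hZd : ∀ ν, 1 < nn ν → 0 < nd ν ∧ (∀ ℓ, ((αp ν * δp ν).map φ).eval (a ν ℓ) ≠ 0) ∧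
      IsZeuthenExpansion p (fp ν) (αp ν) (δp ν) (β ν) (nd ν) (nn ν))
    (e : ℕ) :
    ∃ c : k, c ≠ 0 ∧
      lim0 ((-1 : HahnSeries ℚ L) ^ e *
          rootsSep (fun q : Σ ν : ι, Fin (d ν) × Fin (nn ν) => s q.1 q.2.1 q.2.2)) =
        (∏ ν, discOf (a ν) ^ nn ν) *
          (κ c *
            (∏ ν, ∏ ℓ, (((δp ν).map φ).eval (a ν ℓ)) ^ (nn ν - 1)) *
            (∏ ν, ∏ ν' ∈ univ.erase ν, (∏ ℓ, ∏ ℓ', (a ν ℓ - a ν' ℓ')) ^ nn ν') /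
            (∏ ν, ∏ ℓ, (((αp ν).map φ).eval (a ν ℓ)) ^ (nn ν - 1))) := by
  simp only [eval_map] at hZd ⊢
  have hsplit' : (fam n' p).map (Phi φ) =
      ∏ q : Σ ν : ι, Fin (d ν) × Fin (nn ν), (X - C (s q.1 q.2.1 q.2.2)) := by
    simp only [hsplit, Fintype.prod_sigma, Fintype.prod_prod_type]
  have hroot : ∀ ν ℓ i, (fam n' p).eval₂ (Phi φ) (s ν ℓ i) = 0 := fun ν ℓ i => by
    rw [eval₂_eq_prod_sub hsplit']
    exact Finset.prod_eq_zero (mem_univ ⟨ν, ℓ, i⟩) (sub_self _)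
  have hp0 : ∀ ν, p 0 = fp ν ^ nn ν * ∏ ν' ∈ univ.erase ν, fp ν' ^ nn ν' := fun ν => by
    rw [hF0, mul_prod_erase univ (fun ν' => fp ν' ^ nn ν') (mem_univ ν)]
  have haν : ∀ ν, Function.Injective (a ν) := fun ν ℓ ℓ' h =>
    eq_of_heq (Sigma.mk.inj (@ha ⟨ν, ℓ⟩ ⟨ν, ℓ'⟩ h)).2
  choose c hc0 hc using fun ν => exists_prod_leadingCoeff_at_factor κ hdeg (hnn ν) (hfmonic ν)
    (hp0 ν) (haν ν) (hffac ν)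
    (eval₂_prod_erase_ne_zero hffac ha ν) (hs ν) (hroot ν) (hZd ν)
  have hres : ∀ ν, ∏ ℓ, (∏ ν' ∈ univ.erase ν, fp ν' ^ nn ν').eval₂ φ (a ν ℓ) =
      ∏ ν' ∈ univ.erase ν, (∏ ℓ, ∏ ℓ', (a ν ℓ - a ν' ℓ')) ^ nn ν' := fun ν => by
    simp only [eval₂_prod_erase hffac, ← Finset.prod_pow]
    exact Finset.prod_comm
  have hsign : ((-1 : HahnSeries ℚ L) ^ e).leadingCoeff = (-1) ^ e := by
    simpa using ((HasConst.C (-1 : L)).pow e).leadingCoeff_eq (by simp)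
  refine ⟨(-1) ^ e * ∏ ν, c ν,
    mul_ne_zero (by simp) (Finset.prod_ne_zero_iff.2 fun ν _ => hc0 ν), ?_⟩
  rw [lim0_eq_leadingCoeff, HahnSeries.leadingCoeff_mul, hsign, rootsSep,
    prod_offDiag_sub_eq_prod_eval₂_derivative hsplit', hahnSeries_leadingCoeff_prod,
    Fintype.prod_sigma]
  simp only [Fintype.prod_prod_type, hc, hres, Finset.prod_div_distrib, Finset.prod_mul_distrib,
    map_mul, map_prod, map_pow, map_neg, map_one]
  ring

/-- **Corollary 3.8.**  Suppose `F(x,t)` satisfies `(α_ν, δ_{ν,n(ν)})`-Zd for each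
`f_ν = ∏_ℓ (x − a_{νℓ})` with `n_ν > 1`, the `a_{νℓ}` pairwise distinct, and
`Δ_{A[[t]]}(F) ≠ 0`.  Then there is a nonzero constant `c ∈ k` with
`Δ_{A[[t]]}(F)_0 = ∏_ν Δ(f_ν)^{n_ν} · c · ∏_ν res(f_ν, δ_ν^{n_ν−1}) ·
  ∏_ν ∏_{ν'≠ν} res(f_ν, f_{ν'})^{n_{ν'}} / ∏_ν res(f_ν, α_ν^{n_ν−1})`. -/
theorem stmt9 {k A L : Type*} [Field k] [IsAlgClosed k] [CharZero k]
    [CommRing A] [IsDomain A] [Algebra k A]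
    [Field L] [IsAlgClosed L] [CharZero L]
    (φ : A →+* L) (hφ : Function.Injective φ)
    (n' : ℕ) (p : ℕ → Polynomial A) (hdeg : ∀ i, (p i).natDegree ≤ n')
    (m : ℕ) (d nn : Fin m → ℕ) (hd : ∀ ν, 0 < d ν) (hnn : ∀ ν, 0 < nn ν)
    (hn' : n' = ∑ ν, d ν * nn ν)
    (a : (ν : Fin m) → Fin (d ν) → L)
    (ha : Function.Injective fun q : Σ ν, Fin (d ν) => a q.1 q.2)
    (fp : Fin m → Polynomial A) (hfmonic : ∀ ν, (fp ν).Monic)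
    (hffac : ∀ ν, (fp ν).map φ = ∏ ℓ, (X - C (a ν ℓ)))
    (hF0 : p 0 = ∏ ν, fp ν ^ nn ν)
    (s : (ν : Fin m) → (ℓ : Fin (d ν)) → Fin (nn ν) → HahnSeries ℚ L)
    (hs : ∀ ν ℓ i, HasConst (s ν ℓ i) (a ν ℓ))
    (hsplit : (fam n' p).map (Phi φ) = ∏ ν, ∏ ℓ, ∏ i, (X - C (s ν ℓ i)))
    (hΔ : rootsSep (fun q : Σ ν : Fin m, Fin (d ν) × Fin (nn ν) =>
        s q.1 q.2.1 q.2.2) ≠ 0)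
    (αp δp : Fin m → Polynomial A) (β : Fin m → ℕ → Polynomial A) (nd : Fin m → ℕ)
    (hZd : ∀ ν, 1 < nn ν →
      1 ≤ nd ν ∧
      (∀ ℓ, ((αp ν * δp ν).map φ).eval (a ν ℓ) ≠ 0) ∧
      ∀ i ≤ nd ν, αp ν * p i =
        PowerSeries.coeff (R := Polynomial A) i
          ((PowerSeries.mk fun j =>
            if j = 0 then fp ν * β ν 0 else if j < nd ν then β ν j else 0) ^ nn ν) +
          (if i = nd ν then δp ν else 0)) :
    ∃ c : k, c ≠ 0 ∧
      lim0 ((-1 : HahnSeries ℚ L) ^ (n' * (n' - 1) / 2) *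
          rootsSep (fun q : Σ ν : Fin m, Fin (d ν) × Fin (nn ν) => s q.1 q.2.1 q.2.2)) =
        (∏ ν, discOf (a ν) ^ nn ν) *
          (φ (algebraMap k A c) *
            (∏ ν, ∏ ℓ, (((δp ν).map φ).eval (a ν ℓ)) ^ (nn ν - 1)) *
            (∏ ν, ∏ ν' ∈ Finset.univ.erase ν,
              (∏ ℓ, ∏ ℓ', (a ν ℓ - a ν' ℓ')) ^ nn ν') /
            (∏ ν, ∏ ℓ, (((αp ν).map φ).eval (a ν ℓ)) ^ (nn ν - 1))) := by
  exact stmt9_general (φ.comp (algebraMap k A)) φ n' p hdeg d nn hnn a ha fp hfmonic hffac hF0 s hs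
    hsplit αp δp β nd hZd _
end
end
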